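/- Let m ∈ ℝ and let W₁, W₂ be polynomial functions of the four variables (a,b,c,d) = (ψ₁, ψ̄₁, ψ₂, ψ̄₂) satisfying the harmonicity conditions ∂_aW₂ + ∂_cW₁ = ∂_bW₂ − ∂_dW₁ = ∂_cW₂ − ∂_aW₁ = ∂_dW₂ + ∂_bW₁ = 0. Let (ψ₁, ψ₂) be a smooth solution of the 1D Dirac system i∂_tψ₁ = ∂_xψ₂ + mψ₁ − W₁, i∂_tψ₂ = −∂_xψ₁ − mψ₂ + W₂. Then ψ₁ and ψ₂ satisfy the second-order (nonlinear Klein–Gordon type) equations: ∂_t²ψ₁ = ∂_x²ψ₁ − m²ψ₁ + mW₁ + m(∂_aW₁)ψ₁ − (∂_aW₁)W₁ − m(∂_bW₁)ψ̄₁ + (∂_bW₁)W̄₁ − m(∂_cW₁)ψ₂ + (∂_cW₁)W₂ + m(∂_dW₁)ψ̄₂ − (∂_dW₁)W̄₂, and ∂_t²ψ₂ = ∂_x²ψ₂ − m²ψ₂ + mW₂ − m(∂_aW₂)ψ₁ + (∂_aW₂)W₁ + m(∂_bW₂)ψ̄₁ − (∂_bW₂)W̄₁ + m(∂_cW₂)ψ₂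 − (∂_cW₂)W₂ − m(∂_dW₂)ψ̄₂ + (∂_dW₂)W̄₂, where all derivatives ∂_aW_j, ∂_bW_j, ∂_cW_j, ∂_dW_j and the values W_j, W̄_j are evaluated at (a,b,c,d) = (ψ₁(t,x), ψ̄₁(t,x), ψ₂(t,x), ψ̄₂(t,x)). -/

import Mathlib

/-- Evaluation of a polynomial in the four variables `(a,b,c,d) = (ψ₁, ψ̄₁, ψ₂, ψ̄₂)`. -/
noncomputable def evalW (W : MvPolynomial (Fin 4) ℂ) (z w : ℂ) : ℂ :=
  MvPolynomial.eval ![z, (starRingEnd ℂ) z, w, (starRingEnd ℂ) w] W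

/-!
Write the system for `u = (ψ₁, ψ₂)` as `i ∂ₜu = J ∂ₓu + F(u)` with `J(p, q) = (q, -p)`, so that
`J² = -1`. Applying `i ∂ₜ` and substituting the system gives
`-∂ₜ²u = -∂ₓ²u + J F'(u) ∂ₓu + i F'(u) ∂ₜu`, where `∂ₜu = -i (J ∂ₓu + F(u))`. The harmonicity
conditions say exactly that `J F'(u) h = i F'(u) (i J h)` for all `h`, so the first-order
derivatives cancel and `∂ₜ²u = ∂ₓ²u + i F'(u) (i F(u))` remains.
-/

open Filter Topology ComplexConjugate

section Calculus

variable {𝕜 : Type*} [NontriviallyNormedField 𝕜]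

theorem hasFDerivAt_mvPolynomial_eval {σ : Type*} [Fintype σ]
    (p : MvPolynomial σ 𝕜) (x : σ → 𝕜) :
    HasFDerivAt (fun y => MvPolynomial.eval y p)
      (∑ i, MvPolynomial.eval x (MvPolynomial.pderiv i p) •
        (ContinuousLinearMap.proj i : (σ → 𝕜) →L[𝕜] 𝕜)) x := by
  classical
  induction p using MvPolynomial.induction_on with
  | C a =>
    simp only [MvPolynomial.eval_C]
    refine (hasFDerivAt_const a x).congr_fderiv ?_
    ext v
    simp
  | add p q hp hq =>
    simp only [map_add]
    refine (hp.add hq).congr_fderiv ?_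
    ext v
    simp [add_mul, Finset.sum_add_distrib]
  | mul_X p n hp =>
    simp only [map_mul, MvPolynomial.eval_X]
    refine (hp.mul (hasFDerivAt_apply n x)).congr_fderiv ?_
    ext v
    simp [MvPolynomial.pderiv_X, Pi.single_apply, add_mul,
      apply_ite (MvPolynomial.eval x), Finset.sum_add_distrib, Finset.mul_sum, mul_assoc]

variable {E F G : Type*} [NormedAddCommGroup E] [NormedSpace 𝕜 E]
  [NormedAddCommGroup F] [NormedSpace 𝕜 F] [NormedAddCommGroup G] [NormedSpace 𝕜 G]
  {u : E → F} {γ : 𝕜 → E} {v : E} {t : 𝕜}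

theorem deriv_clm_comp_curve (L : F →L[𝕜] G) (hu : DifferentiableAt 𝕜 u (γ t))
    (hγ : HasDerivAt γ v t) :
    deriv (fun s => L (u (γ s))) t = L (fderiv 𝕜 u (γ t) v) :=
  (L.hasFDerivAt.comp_hasDerivAt t (hu.hasFDerivAt.comp_hasDerivAt t hγ)).deriv

theorem deriv_deriv_clm_comp_line (L : F →L[𝕜] G) (hu : ContDiffAt 𝕜 2 u (γ t))
    (hγ : ∀ s, HasDerivAt γ v s) :
    deriv (fun s => deriv (fun r => L (u (γ r))) s) t
      = L (fderiv 𝕜 (fderiv 𝕜 u) (γ t) v v) := by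
  have hfirst : (fun s => deriv (fun r => L (u (γ r))) s)
      =ᶠ[𝓝 t] fun s => L (fderiv 𝕜 u (γ s) v) :=
    ((hγ t).continuousAt.eventually (hu.eventually (by simp))).mono fun s hs =>
      deriv_clm_comp_curve L (hs.differentiableAt (by simp)) (hγ s)
  have hu' : DifferentiableAt 𝕜 (fderiv 𝕜 u) (γ t) :=
    (hu.fderiv_right (m := 1) (by norm_num)).differentiableAt (by simp)
  rw [hfirst.deriv_eq]
  exact deriv_clm_comp_curve (L ∘L ContinuousLinearMap.apply 𝕜 F v) hu' (hγ t)

theorem hasDerivAt_mk_const (t : 𝕜) (x : F) :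
    HasDerivAt (fun s : 𝕜 => (s, x)) (1, 0) t :=
  (hasDerivAt_id t).prodMk (hasDerivAt_const t x)

theorem hasDerivAt_const_mk (t : F) (x : 𝕜) :
    HasDerivAt (fun y : 𝕜 => (t, y)) (0, 1) x :=
  (hasDerivAt_const x t).prodMk (hasDerivAt_id x)

end Calculus

section AbstractDirac

variable {E V : Type*} [NormedAddCommGroup E] [NormedSpace ℝ E]
  [NormedAddCommGroup V] [NormedSpace ℂ V] [NormedSpace ℝ V] [IsScalarTower ℝ ℂ V]
  {J : V →L[ℂ] V} {u f : E → V} {f' : E →L[ℝ] V} {p τ ξ : E}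

theorem I_smul_fderiv_fderiv_of_dirac (hu : ContDiffAt ℝ 2 u p) (hf : HasFDerivAt f f' p)
    (hdirac : ∀ᶠ q in 𝓝 p, Complex.I • fderiv ℝ u q τ = J (fderiv ℝ u q ξ) + f q) (w : E) :
    Complex.I • fderiv ℝ (fderiv ℝ u) p w τ
      = J (fderiv ℝ (fderiv ℝ u) p w ξ) + f' w := by
  have hu' : HasFDerivAt (fderiv ℝ u) (fderiv ℝ (fderiv ℝ u) p) p :=
    ((hu.fderiv_right (m := 1) (by norm_num)).differentiableAt (by simp)).hasFDerivAt
  have hdir (v : E) : HasFDerivAt (fun q => fderiv ℝ u q v)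
      (ContinuousLinearMap.apply ℝ V v ∘L fderiv ℝ (fderiv ℝ u) p) p :=
    (ContinuousLinearMap.apply ℝ V v).hasFDerivAt.comp p hu'
  have hleft := (hdir τ).const_smul Complex.I
  have hright := ((J.restrictScalars ℝ).hasFDerivAt.comp p (hdir ξ)).add hf
  exact DFunLike.congr_fun (hleft.unique (hright.congr_of_eventuallyEq hdirac)) w

theorem wave_eq_of_dirac (hJ : ∀ v, J (J v) = -v) (hu : ContDiffAt ℝ 2 u p)
    (hf : HasFDerivAt f f' p)
    (hdirac : ∀ᶠ q in 𝓝 p, Complex.I • fderiv ℝ u q τ = J (fderiv ℝ u q ξ) + f q) :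
    fderiv ℝ (fderiv ℝ u) p τ τ
      = fderiv ℝ (fderiv ℝ u) p ξ ξ - J (f' ξ) - Complex.I • f' τ := by
  have hsymm : fderiv ℝ (fderiv ℝ u) p τ ξ = fderiv ℝ (fderiv ℝ u) p ξ τ :=
    (hu.isSymmSndFDerivAt (by simp)).eq τ ξ
  calc fderiv ℝ (fderiv ℝ u) p τ τ
      = -(Complex.I • Complex.I • fderiv ℝ (fderiv ℝ u) p τ τ) := by
        rw [smul_smul, Complex.I_mul_I, neg_one_smul, neg_neg]
    _ = -(J (Complex.I • fderiv ℝ (fderiv ℝ u) p ξ τ) + Complex.I • f' τ) := by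
        rw [I_smul_fderiv_fderiv_of_dirac hu hf hdirac τ, hsymm, smul_add, map_smul]
    _ = fderiv ℝ (fderiv ℝ u) p ξ ξ - J (f' ξ) - Complex.I • f' τ := by
        rw [I_smul_fderiv_fderiv_of_dirac hu hf hdirac ξ, map_add, hJ]
        abel

theorem klein_gordon_of_dirac {F : V → V} {F' : V →L[ℝ] V} (hJ : ∀ v, J (J v) = -v)
    (hu : ContDiffAt ℝ 2 u p) (hF : HasFDerivAt F F' (u p))
    (hJF : ∀ h, J (F' h) = Complex.I • F' (Complex.I • J h))
    (hdirac : ∀ᶠ q in 𝓝 p, Complex.I • fderiv ℝ u q τ = J (fderiv ℝ u q ξ) + F (u q)) :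
    fderiv ℝ (fderiv ℝ u) p τ τ
      = fderiv ℝ (fderiv ℝ u) p ξ ξ + Complex.I • F' (Complex.I • F (u p)) := by
  have hu' : HasFDerivAt u (fderiv ℝ u p) p := (hu.differentiableAt (by simp)).hasFDerivAt
  have hτ : fderiv ℝ u p τ = -(Complex.I • (J (fderiv ℝ u p ξ) + F (u p))) := by
    rw [← hdirac.self_of_nhds, smul_smul, Complex.I_mul_I, neg_one_smul, neg_neg]
  rw [wave_eq_of_dirac hJ hu (hF.comp p hu') hdirac, ContinuousLinearMap.comp_apply,
    ContinuousLinearMap.comp_apply, hJF, hτ, map_neg, smul_add, map_add, smul_neg, smul_add]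
  abel

end AbstractDirac

section Wirtinger

/-- The real-linear map `(z, w) ↦ (z, z̄, w, w̄)`, which substitutes for the formal variables
`(a, b, c, d)`. -/
noncomputable def withConj : ℂ × ℂ →L[ℝ] Fin 4 → ℂ :=
  ContinuousLinearMap.pi
    ![.fst ℝ ℂ ℂ, Complex.conjCLE ∘L .fst ℝ ℂ ℂ, .snd ℝ ℂ ℂ, Complex.conjCLE ∘L .snd ℝ ℂ ℂ]

theorem withConj_apply (z : ℂ × ℂ) : withConj z = ![z.1, conj z.1, z.2, conj z.2] := by
  ext i
  fin_cases i <;> rfl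

/-- The real differential on `ℂ × ℂ` whose Wirtinger derivatives with respect to
`z, z̄, w, w̄` are `c 0, c 1, c 2, c 3`. -/
noncomputable def wirtingerDifferential (c : Fin 4 → ℂ) : ℂ × ℂ →L[ℝ] ℂ :=
  ∑ i, c i • (ContinuousLinearMap.proj i ∘L withConj)

theorem wirtingerDifferential_apply (c : Fin 4 → ℂ) (z : ℂ × ℂ) :
    wirtingerDifferential c z = c 0 * z.1 + c 1 * conj z.1 + c 2 * z.2 + c 3 * conj z.2 := by
  simp [wirtingerDifferential, withConj_apply, Fin.sum_univ_four]

theorem hasFDerivAt_evalW (W : MvPolynomial (Fin 4) ℂ) (z : ℂ × ℂ) :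
    HasFDerivAt (fun y : ℂ × ℂ => evalW W y.1 y.2)
      (wirtingerDifferential fun i => evalW (MvPolynomial.pderiv i W) z.1 z.2) z := by
  have hW := ((hasFDerivAt_mvPolynomial_eval W (withConj z)).restrictScalars ℝ).comp z
    withConj.hasFDerivAt
  simp only [Function.comp_def, withConj_apply] at hW
  refine hW.congr_fderiv ?_
  ext h <;> simp [wirtingerDifferential, evalW]

end Wirtinger

section Dirac

/-- The matrix `J (p, q) = (q, -p)` in front of the spatial derivative of the Dirac system. -/
noncomputable def diracMatrix : ℂ × ℂ →L[ℂ] ℂ × ℂ :=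
  (ContinuousLinearMap.snd ℂ ℂ ℂ).prod (-ContinuousLinearMap.fst ℂ ℂ ℂ)

theorem diracMatrix_apply (z : ℂ × ℂ) : diracMatrix z = (z.2, -z.1) := rfl

theorem diracMatrix_diracMatrix (z : ℂ × ℂ) : diracMatrix (diracMatrix z) = -z := rfl

/-- The zeroth-order part of the Dirac system, comprising mass and nonlinearity: the system for
`u = (ψ₁, ψ₂)` reads `i ∂ₜu = J ∂ₓu + diracSource m W₁ W₂ u` with `J = diracMatrix`. -/
def diracSource (m : ℝ) (W₁ W₂ : ℂ × ℂ → ℂ) (z : ℂ × ℂ) : ℂ × ℂ :=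
  (m * z.1 - W₁ z, W₂ z - m * z.2)

/-- The differential of `diracSource m W₁ W₂` at a point where `W₁`, `W₂` have Wirtinger
derivatives `c`, `d`. -/
noncomputable def diracSourceDifferential (m : ℝ) (c d : Fin 4 → ℂ) : ℂ × ℂ →L[ℝ] ℂ × ℂ :=
  ((m : ℂ) • ContinuousLinearMap.fst ℝ ℂ ℂ - wirtingerDifferential c).prod
    (wirtingerDifferential d - (m : ℂ) • ContinuousLinearMap.snd ℝ ℂ ℂ)

/-- The harmonicity (Cauchy–Riemann type) conditions at one point, on the Wirtinger derivatives
`c` of `W₁` and `d` of `W₂`. -/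
structure IsDiracHarmonic (c d : Fin 4 → ℂ) : Prop where
  zero_add_two : d 0 + c 2 = 0
  one_sub_three : d 1 - c 3 = 0
  two_sub_zero : d 2 - c 0 = 0
  three_add_one : d 3 + c 1 = 0

variable {m : ℝ} {c d : Fin 4 → ℂ}

theorem isDiracHarmonic_evalW_pderiv {W₁ W₂ : MvPolynomial (Fin 4) ℂ}
    (h₀ : MvPolynomial.pderiv 0 W₂ + MvPolynomial.pderiv 2 W₁ = 0)
    (h₁ : MvPolynomial.pderiv 1 W₂ - MvPolynomial.pderiv 3 W₁ = 0)
    (h₂ : MvPolynomial.pderiv 2 W₂ - MvPolynomial.pderiv 0 W₁ = 0)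
    (h₃ : MvPolynomial.pderiv 3 W₂ + MvPolynomial.pderiv 1 W₁ = 0) (z w : ℂ) :
    IsDiracHarmonic (fun i => evalW (MvPolynomial.pderiv i W₁) z w)
      (fun i => evalW (MvPolynomial.pderiv i W₂) z w) := by
  constructor <;> simp only [evalW, ← map_add, ← map_sub, h₀, h₁, h₂, h₃, map_zero]

theorem hasFDerivAt_diracSource {W₁ W₂ : ℂ × ℂ → ℂ} {z : ℂ × ℂ}
    (hW₁ : HasFDerivAt W₁ (wirtingerDifferential c) z)
    (hW₂ : HasFDerivAt W₂ (wirtingerDifferential d) z) :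
    HasFDerivAt (diracSource m W₁ W₂) (diracSourceDifferential m c d) z :=
  ((hasFDerivAt_fst.const_smul (m : ℂ)).sub hW₁).prodMk
    (hW₂.sub (hasFDerivAt_snd.const_smul (m : ℂ)))

theorem diracSourceDifferential_apply (z : ℂ × ℂ) :
    diracSourceDifferential m c d z
      = (m * z.1 - wirtingerDifferential c z, wirtingerDifferential d z - m * z.2) := rfl

theorem IsDiracHarmonic.diracMatrix_diracSourceDifferential (hcd : IsDiracHarmonic c d)
    (h : ℂ × ℂ) :
    diracMatrix (diracSourceDifferential m c d h)
      = Complex.I • diracSourceDifferential m c d (Complex.I • diracMatrix h) := by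
  obtain ⟨h₀, h₁, h₂, h₃⟩ := hcd
  simp only [diracMatrix_apply, diracSourceDifferential_apply, wirtingerDifferential_apply,
    Prod.smul_mk, smul_eq_mul, map_mul, map_neg, Complex.conj_I, Prod.mk.injEq]
  constructor
  · linear_combination h.1 * h₀ + conj h.1 * h₁ + h.2 * h₂ + conj h.2 * h₃
      - (m * h.2 - c 0 * h.2 + c 1 * conj h.2 + c 2 * h.1 - c 3 * conj h.1) * Complex.I_mul_I
  · linear_combination h.2 * h₀ - conj h.2 * h₁ - h.1 * h₂ + conj h.1 * h₃
      - (m * h.1 + d 0 * h.2 - d 1 * conj h.2 - d 2 * h.1 + d 3 * conj h.1) * Complex.I_mul_I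

theorem I_smul_diracSourceDifferential_I_smul (z : ℂ × ℂ) :
    Complex.I • diracSourceDifferential m c d (Complex.I • z)
      = (-m * z.1 + c 0 * z.1 - c 1 * conj z.1 + c 2 * z.2 - c 3 * conj z.2,
        m * z.2 - d 0 * z.1 + d 1 * conj z.1 - d 2 * z.2 + d 3 * conj z.2) := by
  simp only [diracSourceDifferential_apply, wirtingerDifferential_apply,
    Prod.smul_fst, Prod.smul_snd, Prod.smul_mk, smul_eq_mul, map_mul, Complex.conj_I,
    Prod.mk.injEq]
  constructor
  · linear_combination
      (m * z.1 - c 0 * z.1 + c 1 * conj z.1 - c 2 * z.2 + c 3 * conj z.2) * Complex.I_mul_I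
  · linear_combination
      (d 0 * z.1 - d 1 * conj z.1 + d 2 * z.2 - d 3 * conj z.2 - m * z.2) * Complex.I_mul_I

variable {W₁ W₂ : ℂ × ℂ → ℂ} {ψ₁ ψ₂ : ℝ → ℝ → ℂ} {t x : ℝ}

theorem I_smul_fderiv_mk_of_dirac
    (hψ₁ : DifferentiableAt ℝ (fun q : ℝ × ℝ => ψ₁ q.1 q.2) (t, x))
    (hψ₂ : DifferentiableAt ℝ (fun q : ℝ × ℝ => ψ₂ q.1 q.2) (t, x))
    (hdirac₁ : Complex.I * deriv (fun s => ψ₁ s x) t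
      = deriv (fun y => ψ₂ t y) x + m * ψ₁ t x - W₁ (ψ₁ t x, ψ₂ t x))
    (hdirac₂ : Complex.I * deriv (fun s => ψ₂ s x) t
      = -deriv (fun y => ψ₁ t y) x - m * ψ₂ t x + W₂ (ψ₁ t x, ψ₂ t x)) :
    Complex.I • fderiv ℝ (fun q : ℝ × ℝ => (ψ₁ q.1 q.2, ψ₂ q.1 q.2)) (t, x) (1, 0)
      = diracMatrix (fderiv ℝ (fun q : ℝ × ℝ => (ψ₁ q.1 q.2, ψ₂ q.1 q.2)) (t, x) (0, 1))
        + diracSource m W₁ W₂ (ψ₁ t x, ψ₂ t x) := by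
  let u : ℝ × ℝ → ℂ × ℂ := fun q => (ψ₁ q.1 q.2, ψ₂ q.1 q.2)
  have hu : DifferentiableAt ℝ u (t, x) := hψ₁.prodMk hψ₂
  have ht (L : ℂ × ℂ →L[ℝ] ℂ) := deriv_clm_comp_curve (γ := (·, x)) L hu (hasDerivAt_mk_const t x)
  have hx (L : ℂ × ℂ →L[ℝ] ℂ) := deriv_clm_comp_curve (γ := (t, ·)) L hu (hasDerivAt_const_mk t x)
  have ht₁ : deriv (fun s => ψ₁ s x) t = (fderiv ℝ u (t, x) (1, 0)).1 := ht (.fst ℝ ℂ ℂ)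
  have ht₂ : deriv (fun s => ψ₂ s x) t = (fderiv ℝ u (t, x) (1, 0)).2 := ht (.snd ℝ ℂ ℂ)
  have hx₁ : deriv (fun y => ψ₁ t y) x = (fderiv ℝ u (t, x) (0, 1)).1 := hx (.fst ℝ ℂ ℂ)
  have hx₂ : deriv (fun y => ψ₂ t y) x = (fderiv ℝ u (t, x) (0, 1)).2 := hx (.snd ℝ ℂ ℂ)
  rw [ht₁, hx₂, add_sub_assoc] at hdirac₁
  rw [ht₂, hx₁, sub_add_eq_add_sub, add_sub_assoc] at hdirac₂
  exact Prod.ext hdirac₁ hdirac₂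

theorem dirac_to_klein_gordon_general (hcd : IsDiracHarmonic c d)
    (hW₁ : HasFDerivAt W₁ (wirtingerDifferential c) (ψ₁ t x, ψ₂ t x))
    (hW₂ : HasFDerivAt W₂ (wirtingerDifferential d) (ψ₁ t x, ψ₂ t x))
    (hψ₁ : ContDiffAt ℝ 2 (fun q : ℝ × ℝ => ψ₁ q.1 q.2) (t, x))
    (hψ₂ : ContDiffAt ℝ 2 (fun q : ℝ × ℝ => ψ₂ q.1 q.2) (t, x))
    (hdirac₁ : ∀ᶠ q : ℝ × ℝ in 𝓝 (t, x), Complex.I * deriv (fun s => ψ₁ s q.2) q.1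
      = deriv (fun y => ψ₂ q.1 y) q.2 + m * ψ₁ q.1 q.2 - W₁ (ψ₁ q.1 q.2, ψ₂ q.1 q.2))
    (hdirac₂ : ∀ᶠ q : ℝ × ℝ in 𝓝 (t, x), Complex.I * deriv (fun s => ψ₂ s q.2) q.1
      = -deriv (fun y => ψ₁ q.1 y) q.2 - m * ψ₂ q.1 q.2 + W₂ (ψ₁ q.1 q.2, ψ₂ q.1 q.2)) :
    let N := diracSource m W₁ W₂ (ψ₁ t x, ψ₂ t x)
    deriv (fun s => deriv (fun s' => ψ₁ s' x) s) t
        = deriv (fun y => deriv (fun y' => ψ₁ t y') y) x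
          + (-m * N.1 + c 0 * N.1 - c 1 * conj N.1 + c 2 * N.2 - c 3 * conj N.2) ∧
      deriv (fun s => deriv (fun s' => ψ₂ s' x) s) t
        = deriv (fun y => deriv (fun y' => ψ₂ t y') y) x
          + (m * N.2 - d 0 * N.1 + d 1 * conj N.1 - d 2 * N.2 + d 3 * conj N.2) := by
  intro N
  let u : ℝ × ℝ → ℂ × ℂ := fun q => (ψ₁ q.1 q.2, ψ₂ q.1 q.2)
  have hu : ContDiffAt ℝ 2 u (t, x) := hψ₁.prodMk hψ₂
  let D := fderiv ℝ (fderiv ℝ u) (t, x)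
  have hdirac : ∀ᶠ q in 𝓝 (t, x), Complex.I • fderiv ℝ u q (1, 0)
      = diracMatrix (fderiv ℝ u q (0, 1)) + diracSource m W₁ W₂ (u q) := by
    filter_upwards [hdirac₁, hdirac₂, hψ₁.eventually (by simp), hψ₂.eventually (by simp)]
      with q h₁ h₂ hq₁ hq₂
    exact I_smul_fderiv_mk_of_dirac (hq₁.differentiableAt (by simp))
      (hq₂.differentiableAt (by simp)) h₁ h₂
  have hwave : D (1, 0) (1, 0) = D (0, 1) (0, 1)
      + Complex.I • diracSourceDifferential m c d (Complex.I • N) :=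
    klein_gordon_of_dirac diracMatrix_diracMatrix hu (hasFDerivAt_diracSource hW₁ hW₂)
      hcd.diracMatrix_diracSourceDifferential hdirac
  have ht (L : ℂ × ℂ →L[ℝ] ℂ) := deriv_deriv_clm_comp_line (γ := (·, x)) L hu
    fun s => hasDerivAt_mk_const s x
  have hx (L : ℂ × ℂ →L[ℝ] ℂ) := deriv_deriv_clm_comp_line (γ := (t, ·)) L hu
    fun y => hasDerivAt_const_mk t y
  have ht₁ : deriv (fun s => deriv (fun s' => ψ₁ s' x) s) t = (D (1, 0) (1, 0)).1 :=
    ht (.fst ℝ ℂ ℂ)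
  have ht₂ : deriv (fun s => deriv (fun s' => ψ₂ s' x) s) t = (D (1, 0) (1, 0)).2 :=
    ht (.snd ℝ ℂ ℂ)
  have hx₁ : deriv (fun y => deriv (fun y' => ψ₁ t y') y) x = (D (0, 1) (0, 1)).1 :=
    hx (.fst ℝ ℂ ℂ)
  have hx₂ : deriv (fun y => deriv (fun y' => ψ₂ t y') y) x = (D (0, 1) (0, 1)).2 :=
    hx (.snd ℝ ℂ ℂ)
  rw [ht₁, ht₂, hx₁, hx₂, hwave, I_smul_diracSourceDifferential_I_smul]
  exact ⟨rfl, rfl⟩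

end Dirac

/-- The second-order (nonlinear Klein–Gordon) equations satisfied by solutions of the
massive 1D Dirac system with harmonic nonlinearity (from the proof of Lemma 6.1 /
Lemma B.1). -/
theorem dirac_to_klein_gordon
    (m : ℝ)
    (W₁ W₂ : MvPolynomial (Fin 4) ℂ)
    -- harmonicity (Cauchy–Riemann type) conditions
    (h1 : MvPolynomial.pderiv (0 : Fin 4) W₂ + MvPolynomial.pderiv (2 : Fin 4) W₁ = 0)
    (h2 : MvPolynomial.pderiv (1 : Fin 4) W₂ - MvPolynomial.pderiv (3 : Fin 4) W₁ = 0)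
    (h3 : MvPolynomial.pderiv (2 : Fin 4) W₂ - MvPolynomial.pderiv (0 : Fin 4) W₁ = 0)
    (h4 : MvPolynomial.pderiv (3 : Fin 4) W₂ + MvPolynomial.pderiv (1 : Fin 4) W₁ = 0)
    (ψ₁ ψ₂ : ℝ → ℝ → ℂ)
    (hψ₁ : ContDiff ℝ (⊤ : ℕ∞) (fun p : ℝ × ℝ => ψ₁ p.1 p.2))
    (hψ₂ : ContDiff ℝ (⊤ : ℕ∞) (fun p : ℝ × ℝ => ψ₂ p.1 p.2))
    -- the massive 1D Dirac system
    (heq1 : ∀ t x : ℝ,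
      Complex.I * deriv (fun s => ψ₁ s x) t
        = deriv (fun y => ψ₂ t y) x + (m : ℂ) * ψ₁ t x - evalW W₁ (ψ₁ t x) (ψ₂ t x))
    (heq2 : ∀ t x : ℝ,
      Complex.I * deriv (fun s => ψ₂ s x) t
        = -deriv (fun y => ψ₁ t y) x - (m : ℂ) * ψ₂ t x + evalW W₂ (ψ₁ t x) (ψ₂ t x)) :
    (∀ t x : ℝ,
      deriv (fun s => deriv (fun s' => ψ₁ s' x) s) t
        = deriv (fun y => deriv (fun y' => ψ₁ t y') y) x
          - (m : ℂ) ^ 2 * ψ₁ t x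
          + (m : ℂ) * evalW W₁ (ψ₁ t x) (ψ₂ t x)
          + (m : ℂ) * evalW (MvPolynomial.pderiv (0 : Fin 4) W₁) (ψ₁ t x) (ψ₂ t x)
              * ψ₁ t x
          - evalW (MvPolynomial.pderiv (0 : Fin 4) W₁) (ψ₁ t x) (ψ₂ t x)
              * evalW W₁ (ψ₁ t x) (ψ₂ t x)
          - (m : ℂ) * evalW (MvPolynomial.pderiv (1 : Fin 4) W₁) (ψ₁ t x) (ψ₂ t x)
              * (starRingEnd ℂ) (ψ₁ t x)
          + evalW (MvPolynomial.pderiv (1 : Fin 4) W₁) (ψ₁ t x) (ψ₂ t x)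
              * (starRingEnd ℂ) (evalW W₁ (ψ₁ t x) (ψ₂ t x))
          - (m : ℂ) * evalW (MvPolynomial.pderiv (2 : Fin 4) W₁) (ψ₁ t x) (ψ₂ t x)
              * ψ₂ t x
          + evalW (MvPolynomial.pderiv (2 : Fin 4) W₁) (ψ₁ t x) (ψ₂ t x)
              * evalW W₂ (ψ₁ t x) (ψ₂ t x)
          + (m : ℂ) * evalW (MvPolynomial.pderiv (3 : Fin 4) W₁) (ψ₁ t x) (ψ₂ t x)
              * (starRingEnd ℂ) (ψ₂ t x)
          - evalW (MvPolynomial.pderiv (3 : Fin 4) W₁) (ψ₁ t x) (ψ₂ t x)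
              * (starRingEnd ℂ) (evalW W₂ (ψ₁ t x) (ψ₂ t x)))
    ∧
    (∀ t x : ℝ,
      deriv (fun s => deriv (fun s' => ψ₂ s' x) s) t
        = deriv (fun y => deriv (fun y' => ψ₂ t y') y) x
          - (m : ℂ) ^ 2 * ψ₂ t x
          + (m : ℂ) * evalW W₂ (ψ₁ t x) (ψ₂ t x)
          - (m : ℂ) * evalW (MvPolynomial.pderiv (0 : Fin 4) W₂) (ψ₁ t x) (ψ₂ t x)
              * ψ₁ t x
          + evalW (MvPolynomial.pderiv (0 : Fin 4) W₂) (ψ₁ t x) (ψ₂ t x)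
              * evalW W₁ (ψ₁ t x) (ψ₂ t x)
          + (m : ℂ) * evalW (MvPolynomial.pderiv (1 : Fin 4) W₂) (ψ₁ t x) (ψ₂ t x)
              * (starRingEnd ℂ) (ψ₁ t x)
          - evalW (MvPolynomial.pderiv (1 : Fin 4) W₂) (ψ₁ t x) (ψ₂ t x)
              * (starRingEnd ℂ) (evalW W₁ (ψ₁ t x) (ψ₂ t x))
          + (m : ℂ) * evalW (MvPolynomial.pderiv (2 : Fin 4) W₂) (ψ₁ t x) (ψ₂ t x)
              * ψ₂ t x
          - evalW (MvPolynomial.pderiv (2 : Fin 4) W₂) (ψ₁ t x) (ψ₂ t x)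
              * evalW W₂ (ψ₁ t x) (ψ₂ t x)
          - (m : ℂ) * evalW (MvPolynomial.pderiv (3 : Fin 4) W₂) (ψ₁ t x) (ψ₂ t x)
              * (starRingEnd ℂ) (ψ₂ t x)
          + evalW (MvPolynomial.pderiv (3 : Fin 4) W₂) (ψ₁ t x) (ψ₂ t x)
              * (starRingEnd ℂ) (evalW W₂ (ψ₁ t x) (ψ₂ t x))) := by
  have key (t x : ℝ) := dirac_to_klein_gordon_general
    (isDiracHarmonic_evalW_pderiv h1 h2 h3 h4 (ψ₁ t x) (ψ₂ t x))
    (hasFDerivAt_evalW W₁ (ψ₁ t x, ψ₂ t x)) (hasFDerivAt_evalW W₂ (ψ₁ t x, ψ₂ t x))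
    (hψ₁.contDiffAt.of_le ENat.LEInfty.out) (hψ₂.contDiffAt.of_le ENat.LEInfty.out)
    (.of_forall fun q => heq1 q.1 q.2) (.of_forall fun q => heq2 q.1 q.2)
  simp only [diracSource, map_sub, map_mul, Complex.conj_ofReal] at key
  exact ⟨fun t x => (key t x).1.trans (by ring), fun t x => (key t x).2.trans (by ring)⟩
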